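/- Assume μ > 0, φ* = 1 and θ < 1. Then for every a ∈ ℕ₀: lim_{q↓0} Φ_q(a) = exp{−∫_θ^1 μ(1 − r̃(w))/(λ(p̃(w) − w)) dw}, where the integral takes its value in [0,∞] and exp{−∞} := 0 (in particular the limit does not depend on a). -/

import Mathlib

open MeasureTheory Filter Set

/-- The probability generating function of the offspring distribution `p`. -/
noncomputable def ptilde (p : ℕ → ℝ) (z : ℝ) : ℝ := ∑' k, p k * z ^ k

/-- The p.g.f. of the immigration/culling mechanism: `rneg` is `r_{-1}`,
`r k` for `k ≥ 1` are the immigration probabilities (we require `r 0 = 0`). -/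
noncomputable def rtilde (rneg : ℝ) (r : ℕ → ℝ) (z : ℝ) : ℝ :=
  rneg / z + ∑' k, r k * z ^ k

/-- `f : ℕ → ℝ` is `q`-harmonic for the branching process with branching mechanism `p`
(rate `lam`) and immigration/culling mechanism `(rneg, r)` (rate `mu`). -/
def IsQHarmonic (lam mu q : ℝ) (p : ℕ → ℝ) (rneg : ℝ) (r : ℕ → ℝ) (f : ℕ → ℝ) : Prop :=
  ∀ x : ℕ, 1 ≤ x →
    (q + lam * x + mu) * f x
      = lam * x * (∑' k, p k * f (x + k - 1))
        + mu * (rneg * f (x - 1) + ∑' k, r k * f (x + k))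

/-- The harmonic function `Φ_q`; `φ` is the smallest fixed point of `ptilde p` in `(0,1]`
and `θ` is the delimiter `θ_q`. -/
noncomputable def Phi (lam mu : ℝ) (p : ℕ → ℝ) (rneg : ℝ) (r : ℕ → ℝ)
    (φ θ q : ℝ) (x : ℕ) : ℝ :=
  q * ∫ v in (0:ℝ)..φ,
      Real.exp (-∫ w in θ..v,
          (q + mu * (1 - rtilde rneg r w)) / (lam * |ptilde p w - w|))
        / (lam * |ptilde p v - v|) * v ^ x

/-- The harmonic function `Ψ_q`. -/
noncomputable def Psi (lam mu : ℝ) (p : ℕ → ℝ) (rneg : ℝ) (r : ℕ → ℝ)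
    (φ q : ℝ) (x : ℕ) : ℝ :=
  1 - q * ∫ v in φ..(1:ℝ),
      Real.exp (-∫ w in v..(1:ℝ),
          (q + mu * (1 - rtilde rneg r w)) / (lam * |ptilde p w - w|))
        / (lam * |ptilde p v - v|) * v ^ x

/-- Condition (E'): `∫_v^1 dz/(z - ptilde p z) < ∞` for some `v ∈ (φ, 1)`. -/
def CondE (p : ℕ → ℝ) (φ : ℝ) : Prop :=
  ∃ v, φ < v ∧ v < 1 ∧
    IntervalIntegrable (fun z => 1 / (z - ptilde p z)) MeasureTheory.volume v 1

/-!
Split `γ_q = q / ρ + κ / ρ` with `κ = μ (1 - r̃)`. With the delimiter held at `θ`, `Φ_q(x)` is the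
integral of `K v = exp (-∫_θ^v κ / ρ) * v ^ x` against the density `q * exp (-q * A v) * A' v` with
`A v = ∫_θ^v 1 / ρ`. As `p̃ ≤ 1`, we have `ρ v ≤ λ (1 - v)`, so `A` increases to `∞` at `1`:
the density is that of an exponential variable of rate `q` transported by `A`, its mass tends to `1`
and concentrates at `1` as `q ↓ 0`, and the limit is the left limit of `K` at `1`. Convexity of `r̃`
gives the sign of `κ`, which makes `K` bounded and this left limit `exp (-∫_θ^1 κ / ρ)`, and it also
gives `θ_q → θ`; hence replacing `θ` by `θ_q` only costs the factor `exp (∫_θ^{θ_q} γ_q) → 1`.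
-/

open Topology ENNReal

section ExponentialPeak

variable {A f : ℝ → ℝ} {a b α : ℝ}

theorem monotoneOn_Ioo_of_hasDerivAt_nonneg
    (hA : ∀ v ∈ Ioo a b, HasDerivAt A (f v) v) (hf : ∀ v ∈ Ioo a b, 0 ≤ f v) :
    MonotoneOn A (Ioo a b) :=
  monotoneOn_of_hasDerivWithinAt_nonneg (convex_Ioo a b)
    (fun x hx ↦ (hA x hx).continuousAt.continuousWithinAt)
    (fun x hx ↦ (hA x (interior_subset hx)).hasDerivWithinAt)
    (fun x hx ↦ hf x (interior_subset hx))

theorem le_of_monotoneOn_of_tendsto_nhdsGT (hA : MonotoneOn A (Ioo a b))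
    (hα : Tendsto A (𝓝[>] a) (𝓝 α)) {v : ℝ} (hv : v ∈ Ioo a b) : α ≤ A v := by
  refine le_of_tendsto hα ?_
  filter_upwards [Ioo_mem_nhdsGT hv.1] with u hu
  exact hA ⟨hu.1, hu.2.trans hv.2⟩ hv hu.2.le

-- Under the substitution `t = A v` this is the tail of an exponential law.
theorem setIntegral_mul_exp_neg_mul_mul_deriv (hab : a < b)
    (hA : ∀ v ∈ Ioo a b, HasDerivAt A (f v) v) (hf : ∀ v ∈ Ioo a b, 0 ≤ f v)
    (hα : Tendsto A (𝓝[>] a) (𝓝 α)) (hb : Tendsto A (𝓝[<] b) atTop) {q : ℝ} (hq : 0 < q) :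
    ∫ v in Ioo a b, q * Real.exp (-(q * A v)) * f v = Real.exp (-(q * α)) := by
  have hcont : ContinuousOn A (Ioo a b) := fun x hx ↦ (hA x hx).continuousAt.continuousWithinAt
  have hmono : MonotoneOn A (Ioo a b) := monotoneOn_Ioo_of_hasDerivAt_nonneg hA hf
  have himage : A '' Ioo a b =ᵐ[volume] Ioi α := by
    have hsup : Ioi α ⊆ A '' Ioo a b :=
      isPreconnected_Ioo.intermediate_value_Ioi (le_principal_iff.2 (Ioo_mem_nhdsGT hab))
        (le_principal_iff.2 (Ioo_mem_nhdsLT hab)) hcont hα hb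
    have hsub : A '' Ioo a b ⊆ Ici α :=
      image_subset_iff.2 fun v hv ↦ le_of_monotoneOn_of_tendsto_nhdsGT hmono hα hv
    exact (hsub.eventuallyLE.trans Ioi_ae_eq_Ici.symm.le).antisymm hsup.eventuallyLE
  calc ∫ v in Ioo a b, q * Real.exp (-(q * A v)) * f v
      = ∫ v in Ioo a b, f v • (q * Real.exp (-q * A v)) := by
        simp only [smul_eq_mul, neg_mul, mul_comm (f _)]
    _ = ∫ t in A '' Ioo a b, q * Real.exp (-q * t) :=
        (integral_image_eq_integral_deriv_smul_of_monotoneOn measurableSet_Ioo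
          (fun v hv ↦ (hA v hv).hasDerivWithinAt) hmono fun t ↦ q * Real.exp (-q * t)).symm
    _ = ∫ t in Ioi α, q * Real.exp (-q * t) := setIntegral_congr_set himage
    _ = Real.exp (-(q * α)) := by
        rw [integral_const_mul, integral_exp_mul_Ioi (neg_lt_zero.2 hq)]
        field_simp

theorem tendstoUniformlyOn_mul_exp_neg_mul_mul_deriv
    (hA : ∀ v ∈ Ioo a b, HasDerivAt A (f v) v) (hf : ∀ v ∈ Ioo a b, 0 ≤ f v)
    (hα : Tendsto A (𝓝[>] a) (𝓝 α)) {s : Set ℝ} (hs : s ⊆ Ioo a b) (hbdd : BddAbove (f '' s)) :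
    TendstoUniformlyOn (fun q v ↦ q * Real.exp (-(q * A v)) * f v) 0 (𝓝[>] 0) s := by
  obtain ⟨M, hM⟩ := hbdd
  have hbound : Tendsto (fun q ↦ q * Real.exp (-(q * α)) * M) (𝓝[>] 0) (𝓝 0) := by
    have hcont : Continuous fun q ↦ q * Real.exp (-(q * α)) * M := by fun_prop
    simpa using (hcont.tendsto 0).mono_left nhdsWithin_le_nhds
  rw [Metric.tendstoUniformlyOn_iff]
  intro ε hε
  filter_upwards [self_mem_nhdsWithin, hbound.eventually_lt_const hε] with q (hq : 0 < q) hqε v hv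
  have hfv := hf v (hs hv)
  rw [Pi.zero_apply, dist_zero_left, Real.norm_of_nonneg (by positivity)]
  refine lt_of_le_of_lt ?_ hqε
  gcongr
  · exact le_of_monotoneOn_of_tendsto_nhdsGT (monotoneOn_Ioo_of_hasDerivAt_nonneg hA hf) hα (hs hv)
  · exact hM (mem_image_of_mem f hv)

theorem tendsto_setIntegral_mul_exp_neg_mul_mul_deriv_smul
    {E : Type*} [NormedAddCommGroup E] [NormedSpace ℝ E] [CompleteSpace E]
    {K : ℝ → E} {L : E} (hab : a < b)
    (hA : ∀ v ∈ Ioo a b, HasDerivAt A (f v) v) (hf : ∀ v ∈ Ioo a b, 0 ≤ f v)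
    (hf_bdd : ∀ c < b, BddAbove (f '' Ioc a c))
    (hα : Tendsto A (𝓝[>] a) (𝓝 α)) (hb : Tendsto A (𝓝[<] b) atTop)
    (hK : IntegrableOn K (Ioo a b)) (hL : Tendsto K (𝓝[<] b) (𝓝 L)) :
    Tendsto (fun q : ℝ ↦ ∫ v in Ioo a b, (q * Real.exp (-(q * A v)) * f v) • K v)
      (𝓝[>] 0) (𝓝 L) := by
  have hmass : ∀ q > 0, ∫ v in Ioo a b, q * Real.exp (-(q * A v)) * f v = Real.exp (-(q * α)) :=
    fun q hq ↦ setIntegral_mul_exp_neg_mul_mul_deriv hab hA hf hα hb hq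
  refine tendsto_setIntegral_peak_smul_of_integrableOn_of_tendsto measurableSet_Ioo
    measurableSet_Ioo subset_rfl self_mem_nhdsWithin (by simp) ?nonneg ?uniform ?mass ?meas hK
    (by rwa [nhdsWithin_Ioo_eq_nhdsLT hab])
  case nonneg =>
    filter_upwards [self_mem_nhdsWithin] with q (hq : 0 < q) v hv
    have hfv := hf v hv
    positivity
  case uniform =>
    intro u hu hbu
    obtain ⟨c, hcb, hcu⟩ := exists_Ioc_subset_of_mem_nhds (hu.mem_nhds hbu) ⟨a, hab⟩
    refine tendstoUniformlyOn_mul_exp_neg_mul_mul_deriv hA hf hα sdiff_subset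
      ((hf_bdd c hcb).mono (image_mono ?_))
    exact fun v hv ↦ ⟨hv.1.1, not_lt.1 fun hcv ↦ hv.2 (hcu ⟨hcv, hv.1.2.le⟩)⟩
  case mass =>
    have hexp : Tendsto (fun q ↦ Real.exp (-(q * α))) (𝓝[>] 0) (𝓝 1) := by
      have hcont : Continuous fun q ↦ Real.exp (-(q * α)) := by fun_prop
      simpa using (hcont.tendsto 0).mono_left nhdsWithin_le_nhds
    exact hexp.congr' (eventually_mem_nhdsWithin.mono fun q hq ↦ (hmass q hq).symm)
  case meas =>
    filter_upwards [self_mem_nhdsWithin] with q hq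
    exact (Integrable.of_integral_ne_zero
      (by rw [hmass q hq]; exact (Real.exp_pos _).ne')).aestronglyMeasurable

end ExponentialPeak

section Primitive

variable {g : ℝ → ℝ} {S : Set ℝ} {a b x v : ℝ}

theorem hasDerivAt_integral_of_continuousOn_ordConnected [S.OrdConnected]
    (hg : ContinuousOn g S) (hx : x ∈ S) (hv : S ∈ 𝓝 v) :
    HasDerivAt (fun v ↦ ∫ w in x..v, g w) (g v) v :=
  intervalIntegral.integral_hasDerivAt_right
    (hg.mono (OrdConnected.uIcc_subset ‹_› hx (mem_of_mem_nhds hv))).intervalIntegrable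
    ((hg.mono interior_subset).stronglyMeasurableAtFilter isOpen_interior v
      (mem_interior_iff_mem_nhds.2 hv))
    (hg.continuousAt hv)

theorem tendsto_integral_nhdsGT_of_continuousOn_Ico
    (hg : ContinuousOn g (Ico a b)) (hx : x ∈ Ico a b) :
    Tendsto (fun v ↦ ∫ w in x..v, g w) (𝓝[>] a) (𝓝 (∫ w in x..a, g w)) := by
  obtain ⟨c, hxc, hcb⟩ := exists_between hx.2
  have hac : a < c := hx.1.trans_lt hxc
  have hint : IntervalIntegrable g volume a c :=
    (hg.mono (by rw [uIcc_of_le hac.le]; exact Icc_subset_Ico_right hcb)).intervalIntegrable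
  have hcont := intervalIntegral.continuousOn_primitive_interval' hint
    (Icc_subset_uIcc ⟨hx.1, hxc.le⟩)
  exact (hcont a left_mem_uIcc).mono_left
    (nhdsWithin_le_of_mem (mem_of_superset (Icc_mem_nhdsGT hac) Icc_subset_uIcc))

theorem tendsto_integral_atTop_change_left
    (hg : ContinuousOn g (Ico a b)) (hx : x ∈ Ico a b)
    (h : Tendsto (fun v ↦ ∫ w in a..v, g w) (𝓝[<] b) atTop) :
    Tendsto (fun v ↦ ∫ w in x..v, g w) (𝓝[<] b) atTop := by
  have hab : a < b := hx.1.trans_lt hx.2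
  have hint : ∀ y ∈ Ico a b, IntervalIntegrable g volume x y := fun y hy ↦
    (hg.mono (ordConnected_Ico.uIcc_subset hx hy)).intervalIntegrable
  refine (tendsto_atTop_add_const_left _ (∫ w in x..a, g w) h).congr' ?_
  filter_upwards [Ico_mem_nhdsLT hab] with v hv
  have hxa := hint a ⟨le_rfl, hab⟩
  exact intervalIntegral.integral_add_adjacent_intervals hxa (hxa.symm.trans (hint v hv))

-- Comparison with `c / (b - w)`, whose primitive `-c * log (b - w)` blows up at `b`.
theorem tendsto_integral_atTop_of_div_sub_le {c : ℝ} (hab : a < b) (hc : 0 < c)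
    (hg : ContinuousOn g (Ico a b)) (hle : ∀ v ∈ Ico a b, c / (b - v) ≤ g v) :
    Tendsto (fun v ↦ ∫ w in a..v, g w) (𝓝[<] b) atTop := by
  have hsub : Tendsto (fun v ↦ b - v) (𝓝[<] b) (𝓝[>] 0) := by
    refine tendsto_nhdsWithin_iff.2
      ⟨?_, eventually_mem_nhdsWithin.mono fun v hv ↦ mem_Ioi.2 (sub_pos.2 hv)⟩
    exact tendsto_nhdsWithin_of_tendsto_nhds (by simpa using (continuous_sub_left b).tendsto b)
  have hlog : Tendsto (fun v ↦ c * (Real.log (b - a) - Real.log (b - v))) (𝓝[<] b) atTop :=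
    (tendsto_atTop_add_const_left _ _
      (tendsto_neg_atBot_atTop.comp (Real.tendsto_log_nhdsGT_zero.comp hsub))).const_mul_atTop hc
  refine tendsto_atTop_mono' _ ?_ hlog
  filter_upwards [Ico_mem_nhdsLT hab] with v hv
  have hIcc : Icc a v ⊆ Ico a b := Icc_subset_Ico_right hv.2
  have hdiv : ContinuousOn (fun w ↦ c / (b - w)) (Icc a v) :=
    continuousOn_const.div (by fun_prop) fun w hw ↦ (sub_pos.2 (hIcc hw).2).ne'
  calc c * (Real.log (b - a) - Real.log (b - v)) = ∫ w in a..v, c / (b - w) := by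
        simp only [div_eq_mul_inv, intervalIntegral.integral_const_mul]
        rw [intervalIntegral.integral_comp_sub_left (fun w ↦ w⁻¹) b,
          integral_inv_of_pos (sub_pos.2 hv.2) (sub_pos.2 hab),
          Real.log_div (sub_pos.2 hab).ne' (sub_pos.2 hv.2).ne']
    _ ≤ ∫ w in a..v, g w :=
        intervalIntegral.integral_mono_on hv.1 (hdiv.intervalIntegrable_of_Icc hv.1)
          ((hg.mono hIcc).intervalIntegrable_of_Icc hv.1) fun w hw ↦ hle w (hIcc hw)

theorem integral_nonneg_of_sign_change
    (hpos : ∀ w ∈ Ioo x b, 0 ≤ g w) (hneg : ∀ w ∈ Ioo a x, g w ≤ 0) (hv : v ∈ Ioo a b) :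
    0 ≤ ∫ w in x..v, g w := by
  rcases le_total x v with hxv | hvx
  · rw [intervalIntegral.integral_of_le hxv]
    exact setIntegral_nonneg measurableSet_Ioc fun w hw ↦ hpos w ⟨hw.1, hw.2.trans_lt hv.2⟩
  · rw [intervalIntegral.integral_of_ge hvx, integral_Ioc_eq_integral_Ioo, neg_nonneg]
    exact setIntegral_nonpos measurableSet_Ioo fun w hw ↦ hneg w ⟨hv.1.trans hw.1, hw.2⟩

end Primitive

section ExpNeg

theorem toReal_exp_neg_coe_ennreal (L : ℝ≥0∞) :
    (EReal.exp (-(L : EReal))).toReal = if L = ⊤ then 0 else Real.exp (-L.toReal) := by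
  induction L using ENNReal.recTopCoe with
  | top => simp
  | coe x =>
    rw [if_neg coe_ne_top, EReal.coe_nnreal_eq_coe_real, ← EReal.coe_neg, EReal.exp_coe,
      toReal_ofReal (Real.exp_pos _).le, coe_toReal]

theorem continuous_toReal_exp_neg_coe_ennreal :
    Continuous fun L : ℝ≥0∞ ↦ (EReal.exp (-(L : EReal))).toReal := by
  have hcont : Continuous fun L : ℝ≥0∞ ↦ EReal.exp (-(L : EReal)) :=
    ENNReal.continuous_exp.comp (continuous_neg.comp continuous_coe_ennreal_ereal)
  refine continuousOn_toReal.comp_continuous hcont fun L ↦ ?_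
  simp

theorem tendsto_ofReal_integral_nhdsLT {g : ℝ → ℝ} {a b : ℝ} (hab : a < b)
    (hg : AEMeasurable g (volume.restrict (Ioo a b)))
    (hint : ∀ v ∈ Ioo a b, IntervalIntegrable g volume a v) (hpos : ∀ v ∈ Ioo a b, 0 ≤ g v) :
    Tendsto (fun v ↦ ENNReal.ofReal (∫ w in a..v, g w)) (𝓝[<] b)
      (𝓝 (∫⁻ w in Ioo a b, ENNReal.ofReal (g w))) := by
  have hcover : AECover (volume.restrict (Ioo a b)) (𝓝[<] b) (fun v ↦ Ioc a v) :=
    aecover_Ioo_of_Ioc tendsto_const_nhds (tendsto_id.mono_left nhdsWithin_le_nhds)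
  refine (hcover.lintegral_tendsto_of_countably_generated hg.ennreal_ofReal).congr' ?_
  filter_upwards [Ioo_mem_nhdsLT hab] with v hv
  have hsub : Ioc a v ⊆ Ioo a b := fun w hw ↦ ⟨hw.1, hw.2.trans_lt hv.2⟩
  rw [Measure.restrict_restrict_of_subset hsub, intervalIntegral.integral_of_le hv.1.le,
    ofReal_integral_eq_lintegral_ofReal (hint v hv).1]
  filter_upwards [self_mem_ae_restrict measurableSet_Ioc] with w hw using hpos w (hsub hw)

theorem tendsto_exp_neg_integral_nhdsLT {g : ℝ → ℝ} {a b : ℝ} (hab : a < b)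
    (hg : AEMeasurable g (volume.restrict (Ioo a b)))
    (hint : ∀ v ∈ Ioo a b, IntervalIntegrable g volume a v) (hpos : ∀ v ∈ Ioo a b, 0 ≤ g v) :
    Tendsto (fun v ↦ Real.exp (-∫ w in a..v, g w)) (𝓝[<] b)
      (𝓝 (EReal.exp (-(∫⁻ w in Ioo a b, ENNReal.ofReal (g w) : ℝ≥0∞))).toReal) := by
  refine ((continuous_toReal_exp_neg_coe_ennreal.tendsto _).comp
    (tendsto_ofReal_integral_nhdsLT hab hg hint hpos)).congr' ?_
  filter_upwards [Ioo_mem_nhdsLT hab] with v hv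
  have hnonneg : 0 ≤ ∫ w in a..v, g w :=
    integral_nonneg_of_sign_change hpos (by simp) hv
  rw [Function.comp_apply, toReal_exp_neg_coe_ennreal, if_neg ofReal_ne_top,
    toReal_ofReal hnonneg]

end ExpNeg

section DriftedExponential

variable {ρ κ h : ℝ → ℝ} {S : Set ℝ} {a b θ : ℝ}

theorem integral_add_div_eq {q x y : ℝ}
    (hρ : IntervalIntegrable (fun w ↦ (ρ w)⁻¹) volume x y)
    (hκ : IntervalIntegrable (fun w ↦ κ w / ρ w) volume x y) :
    ∫ w in x..y, (q + κ w) / ρ w = q * (∫ w in x..y, (ρ w)⁻¹) + ∫ w in x..y, κ w / ρ w := by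
  rw [← intervalIntegral.integral_const_mul, ← intervalIntegral.integral_add (hρ.const_mul q) hκ]
  simp only [add_mul, div_eq_mul_inv]

theorem tendsto_setIntegral_mul_exp_neg_mul_inv_smul {E : Type*} [NormedAddCommGroup E]
    [NormedSpace ℝ E] [CompleteSpace E] {K : ℝ → E} {L : E}
    (hρ : ContinuousOn ρ (Ico a b)) (hρ_pos : ∀ v ∈ Ico a b, 0 < ρ v)
    (hdiv : Tendsto (fun v ↦ ∫ w in a..v, (ρ w)⁻¹) (𝓝[<] b) atTop) (hθ : θ ∈ Ico a b)
    (hK : IntegrableOn K (Ioo a b)) (hL : Tendsto K (𝓝[<] b) (𝓝 L)) :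
    Tendsto (fun q : ℝ ↦
        ∫ v in Ioo a b, (q * Real.exp (-(q * ∫ w in θ..v, (ρ w)⁻¹)) * (ρ v)⁻¹) • K v)
      (𝓝[>] 0) (𝓝 L) := by
  have hinv : ContinuousOn (fun w ↦ (ρ w)⁻¹) (Ico a b) := hρ.inv₀ fun v hv ↦ (hρ_pos v hv).ne'
  refine tendsto_setIntegral_mul_exp_neg_mul_mul_deriv_smul (hθ.1.trans_lt hθ.2)
    (fun v hv ↦ hasDerivAt_integral_of_continuousOn_ordConnected hinv hθ (Ico_mem_nhds hv.1 hv.2))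
    (fun v hv ↦ (inv_pos.2 (hρ_pos v (Ioo_subset_Ico_self hv))).le) (fun c hcb ↦ ?_)
    (tendsto_integral_nhdsGT_of_continuousOn_Ico hinv hθ)
    (tendsto_integral_atTop_change_left hinv hθ hdiv) hK hL
  exact (isCompact_Icc.bddAbove_image (hinv.mono (Icc_subset_Ico_right hcb))).mono
    (image_mono Ioc_subset_Icc_self)

theorem integrableOn_exp_neg_integral_mul [S.OrdConnected] {g : ℝ → ℝ}
    (hg : ContinuousOn g S) (hIS : Ioo a b ⊆ S) (hθ : θ ∈ S)
    (hpos : ∀ v ∈ Ioo θ b, 0 ≤ g v) (hneg : ∀ v ∈ Ioo a θ, g v ≤ 0)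
    (hh : IntegrableOn h (Ioo a b)) :
    IntegrableOn (fun v ↦ Real.exp (-∫ w in θ..v, g w) * h v) (Ioo a b) := by
  have hcont : ContinuousOn (fun v ↦ Real.exp (-∫ w in θ..v, g w)) (Ioo a b) := fun v hv ↦
    (hasDerivAt_integral_of_continuousOn_ordConnected hg hθ
      (mem_of_superset (Ioo_mem_nhds hv.1 hv.2) hIS)).neg.exp.continuousAt.continuousWithinAt
  refine Integrable.bdd_mul (c := 1) hh (hcont.aestronglyMeasurable measurableSet_Ioo) ?_
  filter_upwards [self_mem_ae_restrict measurableSet_Ioo] with v hv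
  rw [Real.norm_of_nonneg (Real.exp_pos _).le, Real.exp_le_one_iff, neg_nonpos]
  exact integral_nonneg_of_sign_change hpos hneg hv

theorem tendsto_mul_integral_exp_neg_integral_add_div [S.OrdConnected] {ℓ : ℝ}
    (hρ : ContinuousOn ρ (Ico a b)) (hρ_pos : ∀ v ∈ Ico a b, 0 < ρ v)
    (hdiv : Tendsto (fun v ↦ ∫ w in a..v, (ρ w)⁻¹) (𝓝[<] b) atTop)
    (hκ : ContinuousOn κ S) (hIS : Ioo a b ⊆ S) (hSI : S ⊆ Ico a b) (hθ : θ ∈ S)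
    (hpos : ∀ v ∈ Ioo θ b, 0 ≤ κ v) (hneg : ∀ v ∈ Ioo a θ, κ v ≤ 0)
    (hh : IntegrableOn h (Ioo a b)) (hℓ : Tendsto h (𝓝[<] b) (𝓝 ℓ)) :
    Tendsto (fun q : ℝ ↦ q * ∫ v in a..b,
        Real.exp (-∫ w in θ..v, (q + κ w) / ρ w) / ρ v * h v) (𝓝[>] 0)
      (𝓝 ((EReal.exp (-(∫⁻ w in Ioo θ b, ENNReal.ofReal (κ w / ρ w) : ℝ≥0∞))).toReal * ℓ)) := by
  have hθI := hSI hθ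
  have hinv : ContinuousOn (fun w ↦ (ρ w)⁻¹) S :=
    (hρ.mono hSI).inv₀ fun v hv ↦ (hρ_pos v (hSI hv)).ne'
  have hg : ContinuousOn (fun w ↦ κ w / ρ w) S :=
    hκ.div (hρ.mono hSI) fun v hv ↦ (hρ_pos v (hSI hv)).ne'
  have hsub : ∀ v ∈ Ioo a b, uIcc θ v ⊆ S := fun v hv ↦
    OrdConnected.uIcc_subset ‹_› hθ (hIS hv)
  have hθIoo : Ioo θ b ⊆ Ioo a b := Ioo_subset_Ioo_left hθI.1
  have hg_pos : ∀ v ∈ Ioo θ b, 0 ≤ κ v / ρ v := fun v hv ↦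
    div_nonneg (hpos v hv) (hρ_pos v (Ioo_subset_Ico_self (hθIoo hv))).le
  have hg_neg : ∀ v ∈ Ioo a θ, κ v / ρ v ≤ 0 := fun v hv ↦
    div_nonpos_of_nonpos_of_nonneg (hneg v hv) (hρ_pos v ⟨hv.1.le, hv.2.trans hθI.2⟩).le
  have hlim := (tendsto_exp_neg_integral_nhdsLT hθI.2
    ((hg.mono (hθIoo.trans hIS)).aemeasurable measurableSet_Ioo)
    (fun v hv ↦ (hg.mono (hsub v (hθIoo hv))).intervalIntegrable) hg_pos).mul hℓ
  refine (tendsto_setIntegral_mul_exp_neg_mul_inv_smul hρ hρ_pos hdiv hθI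
    (integrableOn_exp_neg_integral_mul hg hIS hθ hg_pos hg_neg hh) hlim).congr fun q ↦ ?_
  rw [intervalIntegral.integral_of_le (hθI.1.trans hθI.2.le), integral_Ioc_eq_integral_Ioo,
    ← integral_const_mul]
  refine setIntegral_congr_fun measurableSet_Ioo fun v hv ↦ ?_
  simp only [smul_eq_mul]
  rw [integral_add_div_eq (hinv.mono (hsub v hv)).intervalIntegrable
    (hg.mono (hsub v hv)).intervalIntegrable, neg_add, Real.exp_add]
  ring

theorem tendsto_integral_add_div_zero [S.OrdConnected] {u : ℝ → ℝ}
    (hρ : ContinuousOn ρ S) (hρ_ne : ∀ v ∈ S, ρ v ≠ 0) (hκ : ContinuousOn κ S)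
    (hθ : S ∈ 𝓝 θ) (hu : Tendsto u (𝓝[>] 0) (𝓝 θ)) :
    Tendsto (fun q ↦ ∫ w in θ..u q, (q + κ w) / ρ w) (𝓝[>] 0) (𝓝 0) := by
  have hθS := mem_of_mem_nhds hθ
  have hinv : ContinuousOn (fun w ↦ (ρ w)⁻¹) S := hρ.inv₀ hρ_ne
  have hg : ContinuousOn (fun w ↦ κ w / ρ w) S := hκ.div hρ hρ_ne
  have hprim {g : ℝ → ℝ} (hg : ContinuousOn g S) :
      Tendsto (fun q ↦ ∫ w in θ..u q, g w) (𝓝[>] 0) (𝓝 0) := by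
    have hcont := (hasDerivAt_integral_of_continuousOn_ordConnected hg hθS hθ).continuousAt
    simpa [Function.comp_def] using hcont.tendsto.comp hu
  have hq : Tendsto (fun q : ℝ ↦ q) (𝓝[>] 0) (𝓝 0) := tendsto_id.mono_left nhdsWithin_le_nhds
  have hsum := (hq.mul (hprim hinv)).add (hprim hg)
  rw [zero_mul, add_zero] at hsum
  refine hsum.congr' ?_
  filter_upwards [hu.eventually hθ] with q hqS
  have hsub : uIcc θ (u q) ⊆ S := OrdConnected.uIcc_subset ‹_› hθS hqS
  exact (integral_add_div_eq (hinv.mono hsub).intervalIntegrable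
    (hg.mono hsub).intervalIntegrable).symm

end DriftedExponential

section GeneratingFunction

variable {c : ℕ → ℝ} {z : ℝ}

theorem hasSum_of_tsum_ne_zero {ι : Type*} {f : ι → ℝ} {s : ℝ} (hs : s ≠ 0)
    (hf : ∑' i, f i = s) : HasSum f s := by
  have hsummable : Summable f := by
    by_contra hns
    exact hs (hf.symm.trans (tsum_eq_zero_of_not_summable hns))
  exact hf ▸ hsummable.hasSum

theorem summable_mul_pow (hc : Summable c) (hz : |z| ≤ 1) : Summable fun k ↦ c k * z ^ k := by
  refine .of_norm_bounded hc.abs fun k ↦ ?_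
  rw [norm_mul, norm_pow]
  exact mul_le_of_le_one_right (norm_nonneg _) (pow_le_one₀ (norm_nonneg _) hz)

theorem continuousOn_ptilde (hc : Summable c) : ContinuousOn (ptilde c) (Icc (-1) 1) := by
  refine continuousOn_tsum (fun k ↦ by fun_prop) hc.abs fun k z hz ↦ ?_
  rw [norm_mul, norm_pow]
  exact mul_le_of_le_one_right (norm_nonneg _) (pow_le_one₀ (norm_nonneg _) (abs_le.2 hz))

theorem ptilde_zero (c : ℕ → ℝ) : ptilde c 0 = c 0 := by
  rw [ptilde, tsum_eq_single 0 fun k hk ↦ by simp [hk]]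
  simp

theorem ptilde_le_tsum (hc0 : ∀ k, 0 ≤ c k) (hc : Summable c) (hz : z ∈ Icc 0 1) :
    ptilde c z ≤ ∑' k, c k :=
  (summable_mul_pow hc (abs_le.2 ⟨by linarith [hz.1], hz.2⟩)).tsum_le_tsum
    (fun k ↦ mul_le_of_le_one_right (hc0 k) (pow_le_one₀ hz.1 hz.2)) hc

theorem convexOn_ptilde (hc0 : ∀ k, 0 ≤ c k) (hc : Summable c) :
    ConvexOn ℝ (Icc 0 1) (ptilde c) := by
  have hsum : ∀ x ∈ Icc (0 : ℝ) 1, Summable fun k ↦ c k * x ^ k := fun x hx ↦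
    summable_mul_pow hc (abs_le.2 ⟨by linarith [hx.1], hx.2⟩)
  refine ⟨convex_Icc 0 1, fun x hx y hy s t hs ht hst ↦ ?_⟩
  have hterm : ∀ k, c k * (s * x + t * y) ^ k ≤ s * (c k * x ^ k) + t * (c k * y ^ k) := fun k ↦ by
    have hpow := ((convexOn_pow k).smul (hc0 k)).2 (mem_Ici.2 hx.1) (mem_Ici.2 hy.1) hs ht hst
    simpa only [smul_eq_mul] using hpow
  have hx_sum := (hsum x hx).mul_left s
  have hy_sum := (hsum y hy).mul_left t
  simp only [ptilde, smul_eq_mul]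
  rw [← tsum_mul_left, ← tsum_mul_left, ← hx_sum.tsum_add hy_sum]
  exact (hsum _ (convex_Icc 0 1 hx hy hs ht hst)).tsum_le_tsum hterm (hx_sum.add hy_sum)

variable {rneg : ℝ} {r : ℕ → ℝ}

theorem rtilde_zero_left (r : ℕ → ℝ) : rtilde 0 r = ptilde r := by
  ext z
  simp [rtilde, ptilde]

theorem rtilde_one (rneg : ℝ) (r : ℕ → ℝ) : rtilde rneg r 1 = rneg + ∑' k, r k := by
  simp [rtilde]

theorem continuousOn_rtilde (hr : Summable r) : ContinuousOn (rtilde rneg r) (Ioc 0 1) :=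
  (continuousOn_const.div continuousOn_id fun _ hz ↦ hz.1.ne').add
    ((continuousOn_ptilde hr).mono fun _ hz ↦ ⟨by linarith [hz.1], hz.2⟩)

theorem convexOn_rtilde (hrneg : 0 ≤ rneg) (hr0 : ∀ k, 0 ≤ r k) (hr : Summable r) :
    ConvexOn ℝ (Ioc 0 1) (rtilde rneg r) := by
  have hinv : ConvexOn ℝ (Ioc 0 1) fun z : ℝ ↦ rneg / z := by
    simpa [div_eq_mul_inv] using
      ((convexOn_zpow (𝕜 := ℝ) (-1)).subset (fun _ hz ↦ hz.1) (convex_Ioc 0 1)).smul hrneg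
  exact hinv.add ((convexOn_ptilde hr0 hr).subset Ioc_subset_Icc_self (convex_Ioc 0 1))

end GeneratingFunction

section ConvexRoot

variable {f : ℝ → ℝ} {a b c θ : ℝ}

theorem le_of_convexOn_of_eq_endpoints {s : Set ℝ} (hf : ConvexOn ℝ s f) (hθ : θ ∈ s) (hb : b ∈ s)
    (hfθ : f θ = c) (hfb : f b = c) {v : ℝ} (hv : v ∈ Icc θ b) : f v ≤ c := by
  have hle := hf.le_on_segment hθ hb (by rwa [segment_eq_Icc (hv.1.trans hv.2)])
  rwa [hfθ, hfb, max_self] at hle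

theorem lt_of_convexOn_of_lt_root (hf : ConvexOn ℝ (Ioc a b) f) (hθb : θ < b)
    (hfθ : f θ = c) (hfb : f b = c) (hmin : ∀ z ∈ Ioc a b, f z = c → θ ≤ z) {v : ℝ}
    (hv : v ∈ Ioo a θ) : c < f v := by
  have hvb : v < b := hv.2.trans hθb
  have hslope := hf.slope_mono_adjacent ⟨hv.1, hvb.le⟩ ⟨hv.1.trans hvb, le_rfl⟩ hv.2 hθb
  rw [hfb, hfθ, sub_self, zero_div, div_le_iff₀ (sub_pos.2 hv.2), zero_mul, sub_nonpos] at hslope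
  exact lt_of_le_of_ne hslope fun heq ↦ (hmin v ⟨hv.1, hvb.le⟩ heq.symm).not_gt hv.2

theorem strictAntiOn_Ioc_of_convexOn (hf : ConvexOn ℝ (Ioc a b) f) (hθ : θ ∈ Ioc a b)
    (hlt : ∀ v ∈ Ioo a θ, f θ < f v) : StrictAntiOn f (Ioc a θ) := by
  intro v hv w hw hvw
  rcases hw.2.eq_or_lt with rfl | hwθ
  · exact hlt v ⟨hv.1, hvw⟩
  · exact hf.strictAntiOn hθ hwθ (hlt w ⟨hw.1, hwθ⟩) ⟨⟨hv.1, hv.2.trans hθ.2⟩, hvw.le⟩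
      ⟨⟨hw.1, hw.2.trans hθ.2⟩, self_mem_Iic⟩ hvw

theorem tendsto_of_strictAntiOn_Ioc {ι : Type*} {l : Filter ι} {u : ι → ℝ} (haθ : a < θ)
    (hf : StrictAntiOn f (Ioc a θ)) (hu : ∀ᶠ i in l, u i ∈ Ioc a θ)
    (hlim : Tendsto (fun i ↦ f (u i)) l (𝓝 (f θ))) : Tendsto u l (𝓝 θ) := by
  refine tendsto_order.2 ⟨fun y hyθ ↦ ?_, fun y hθy ↦ hu.mono fun i hi ↦ hi.2.trans_lt hθy⟩
  obtain ⟨z, hz, hzθ⟩ := exists_between (max_lt hyθ haθ)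
  obtain ⟨hyz, haz⟩ := max_lt_iff.1 hz
  have hfz : f θ < f z := hf ⟨haz, hzθ.le⟩ ⟨haθ, le_rfl⟩ hzθ
  filter_upwards [hu, hlim.eventually_lt_const hfz] with i hi hlt
  exact hyz.trans ((hf.lt_iff_gt hi ⟨haz, hzθ.le⟩).1 hlt)

end ConvexRoot

section Delimiter

variable {mu rneg θ : ℝ} {r : ℕ → ℝ}

theorem summable_of_rtilde_eq_one (hr : ∀ k, 0 ≤ r k) (hrsum : rneg + ∑' k, r k = 1)
    (hθ : θ ∈ Ioo 0 1) (hθ_root : rtilde rneg r θ = 1) : Summable r := by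
  by_contra hns
  rw [tsum_eq_zero_of_not_summable hns, add_zero] at hrsum
  have hpos : 0 ≤ ∑' k, r k * θ ^ k := tsum_nonneg fun k ↦ mul_nonneg (hr k) (pow_nonneg hθ.1.le k)
  have hinv : 1 < 1 / θ := (one_lt_div hθ.1).2 hθ.2
  rw [rtilde, hrsum] at hθ_root
  linarith

theorem tendsto_delimiter {u : ℝ → ℝ} (hmu : 0 < mu) (hf : ConvexOn ℝ (Ioc 0 1) (rtilde rneg r))
    (hone : rtilde rneg r 1 = 1) (hθ : θ ∈ Ioo 0 1) (hθ_root : rtilde rneg r θ = 1)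
    (hθ_min : ∀ z ∈ Ioc (0 : ℝ) 1, rtilde rneg r z = 1 → θ ≤ z)
    (hu : ∀ q : ℝ, 0 < q → u q ∈ Ioo (0 : ℝ) 1 ∧ q = mu * (rtilde rneg r (u q) - 1)) :
    Tendsto u (𝓝[>] 0) (𝓝 θ) := by
  have hval : ∀ q : ℝ, 0 < q → rtilde rneg r (u q) = 1 + q / mu := fun q hq ↦ by
    rw [eq_comm, ← eq_sub_iff_add_eq', div_eq_iff hmu.ne', mul_comm]
    exact (hu q hq).2
  have hanti : StrictAntiOn (rtilde rneg r) (Ioc 0 θ) :=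
    strictAntiOn_Ioc_of_convexOn hf (Ioo_subset_Ioc_self hθ) fun v hv ↦ by
      rw [hθ_root]
      exact lt_of_convexOn_of_lt_root hf hθ.2 hθ_root hone hθ_min hv
  refine tendsto_of_strictAntiOn_Ioc hθ.1 hanti ?_ ?_
  · filter_upwards [self_mem_nhdsWithin] with q (hq : 0 < q)
    refine ⟨(hu q hq).1.1, not_lt.1 fun hlt ↦ ?_⟩
    have hle := le_of_convexOn_of_eq_endpoints hf (Ioo_subset_Ioc_self hθ)
      (right_mem_Ioc.2 one_pos) hθ_root hone ⟨hlt.le, (hu q hq).1.2.le⟩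
    rw [hval q hq] at hle
    linarith [div_pos hq hmu]
  · have hcont : Tendsto (fun q : ℝ ↦ 1 + q / mu) (𝓝[>] 0) (𝓝 1) := by
      have hc : Continuous fun q : ℝ ↦ 1 + q / mu := by fun_prop
      simpa using (hc.tendsto 0).mono_left nhdsWithin_le_nhds
    rw [hθ_root]
    exact hcont.congr' (eventually_mem_nhdsWithin.mono fun q hq ↦ (hval q hq).symm)

end Delimiter

section BranchingRate

variable {lam : ℝ} {p : ℕ → ℝ} {v : ℝ}

/-- The function `ρ = λ |p̃ - id|` that weights the integrals in `Φ_q`, for the offspring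
distribution `p` and reproduction rate `lam`. -/
noncomputable def rho (lam : ℝ) (p : ℕ → ℝ) (v : ℝ) : ℝ := lam * |ptilde p v - v|

theorem rho_eq_mul_sub (hv : v < ptilde p v) : rho lam p v = lam * (ptilde p v - v) := by
  rw [rho, abs_of_pos (sub_pos.2 hv)]

theorem rho_pos (hlam : 0 < lam) (hv : v < ptilde p v) : 0 < rho lam p v := by
  rw [rho_eq_mul_sub hv]
  exact mul_pos hlam (sub_pos.2 hv)

theorem continuousOn_rho (hp : Summable p) : ContinuousOn (rho lam p) (Icc (-1) 1) :=
  continuousOn_const.mul ((continuousOn_ptilde hp).sub continuousOn_id).abs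

theorem tendsto_integral_inv_rho_atTop (hlam : 0 < lam) (hp0 : ∀ k, 0 ≤ p k) (hp : HasSum p 1)
    (hlt : ∀ v ∈ Ico 0 1, v < ptilde p v) :
    Tendsto (fun v ↦ ∫ w in 0..v, (rho lam p w)⁻¹) (𝓝[<] 1) atTop := by
  have hpos : ∀ v ∈ Ico 0 1, 0 < rho lam p v := fun v hv ↦ rho_pos hlam (hlt v hv)
  have hcont : ContinuousOn (rho lam p) (Ico 0 1) :=
    (continuousOn_rho hp.summable).mono fun v hv ↦ ⟨by linarith [hv.1], hv.2.le⟩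
  refine tendsto_integral_atTop_of_div_sub_le one_pos (inv_pos.2 hlam)
    (hcont.inv₀ fun v hv ↦ (hpos v hv).ne') fun v hv ↦ ?_
  have hle : ptilde p v ≤ 1 := by
    simpa only [hp.tsum_eq] using ptilde_le_tsum hp0 hp.summable (Ico_subset_Icc_self hv)
  rw [div_eq_mul_inv, ← mul_inv]
  refine inv_anti₀ (hpos v hv) ?_
  rw [rho_eq_mul_sub (hlt v hv)]
  gcongr

end BranchingRate

section LimitOfPhi

variable {lam mu rneg θ θ' : ℝ} {p r : ℕ → ℝ} {S : Set ℝ}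

/-- The integral over `(θ, 1)` in the exponent of the limit of `Φ_q` for `φ* = 1`, with values
in `[0, ∞]`. -/
noncomputable def limitExponent (lam mu : ℝ) (p : ℕ → ℝ) (rneg : ℝ) (r : ℕ → ℝ) (θ : ℝ) : ℝ≥0∞ :=
  ∫⁻ w in Ioo θ 1, ENNReal.ofReal (mu * (1 - rtilde rneg r w) / (lam * (ptilde p w - w)))

theorem lintegral_div_rho_eq_limitExponent (hlt : ∀ v ∈ Ioo θ 1, v < ptilde p v) :
    ∫⁻ w in Ioo θ 1, ENNReal.ofReal (mu * (1 - rtilde rneg r w) / rho lam p w) =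
      limitExponent lam mu p rneg r θ :=
  setLIntegral_congr_fun measurableSet_Ioo fun w hw ↦ by
    simp only [rho_eq_mul_sub (hlt w hw)]

theorem Phi_eq_mul_integral_rho (lam mu : ℝ) (p : ℕ → ℝ) (rneg : ℝ) (r : ℕ → ℝ)
    (φ θ q : ℝ) (x : ℕ) :
    Phi lam mu p rneg r φ θ q x = q * ∫ v in 0..φ,
      Real.exp (-∫ w in θ..v, (q + mu * (1 - rtilde rneg r w)) / rho lam p w) / rho lam p v *
        v ^ x := rfl

theorem tendsto_Phi_delimiter_const [S.OrdConnected] (hlam : 0 < lam) (hmu : 0 ≤ mu)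
    (hp0 : ∀ k, 0 ≤ p k) (hp : HasSum p 1) (hlt : ∀ v ∈ Ico 0 1, v < ptilde p v)
    (hr : ContinuousOn (rtilde rneg r) S) (hIS : Ioo 0 1 ⊆ S) (hSI : S ⊆ Ico 0 1) (hθ : θ ∈ S)
    (hle : ∀ v ∈ Ioo θ 1, rtilde rneg r v ≤ 1) (hge : ∀ v ∈ Ioo 0 θ, 1 ≤ rtilde rneg r v)
    (x : ℕ) :
    Tendsto (fun q ↦ Phi lam mu p rneg r 1 θ q x) (𝓝[>] 0)
      (𝓝 (EReal.exp (-(limitExponent lam mu p rneg r θ))).toReal) := by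
  have hcont : ContinuousOn (rho lam p) (Ico 0 1) :=
    (continuousOn_rho hp.summable).mono fun v hv ↦ ⟨by linarith [hv.1], hv.2.le⟩
  have hpow : Continuous fun v : ℝ ↦ v ^ x := continuous_pow x
  have hlim := tendsto_mul_integral_exp_neg_integral_add_div
    (κ := fun w ↦ mu * (1 - rtilde rneg r w)) (ℓ := 1) hcont
    (fun v hv ↦ rho_pos hlam (hlt v hv)) (tendsto_integral_inv_rho_atTop hlam hp0 hp hlt)
    (continuousOn_const.mul (continuousOn_const.sub hr)) hIS hSI hθ
    (fun v hv ↦ mul_nonneg hmu (sub_nonneg.2 (hle v hv)))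
    (fun v hv ↦ mul_nonpos_of_nonneg_of_nonpos hmu (sub_nonpos.2 (hge v hv)))
    (hpow.integrableOn_Icc.mono_set Ioo_subset_Icc_self)
    (by simpa using (hpow.tendsto 1).mono_left nhdsWithin_le_nhds)
  rw [mul_one, lintegral_div_rho_eq_limitExponent
    fun v hv ↦ hlt v ⟨(hSI hθ).1.trans hv.1.le, hv.2⟩] at hlim
  simpa only [Phi_eq_mul_integral_rho] using hlim

theorem Phi_change_delimiter [S.OrdConnected] (hρ : ContinuousOn (rho lam p) S)
    (hρ_ne : ∀ v ∈ S, rho lam p v ≠ 0) (hr : ContinuousOn (rtilde rneg r) S)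
    (hIS : Ioo 0 1 ⊆ S) (hθ : θ ∈ S) (hθ' : θ' ∈ S) (q : ℝ) (x : ℕ) :
    Phi lam mu p rneg r 1 θ' q x =
      Real.exp (∫ w in θ..θ', (q + mu * (1 - rtilde rneg r w)) / rho lam p w) *
        Phi lam mu p rneg r 1 θ q x := by
  have hγ : ContinuousOn (fun w ↦ (q + mu * (1 - rtilde rneg r w)) / rho lam p w) S :=
    (continuousOn_const.add (continuousOn_const.mul (continuousOn_const.sub hr))).div hρ hρ_ne
  have hint : ∀ v ∈ S, IntervalIntegrable
      (fun w ↦ (q + mu * (1 - rtilde rneg r w)) / rho lam p w) volume θ v := fun v hv ↦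
    (hγ.mono (OrdConnected.uIcc_subset ‹_› hθ hv)).intervalIntegrable
  simp only [Phi_eq_mul_integral_rho, intervalIntegral.integral_of_le (zero_le_one' ℝ),
    integral_Ioc_eq_integral_Ioo, ← integral_const_mul]
  refine setIntegral_congr_fun measurableSet_Ioo fun v hv ↦ ?_
  rw [← intervalIntegral.integral_interval_sub_left (hint v (hIS hv)) (hint θ' hθ'), neg_sub,
    sub_eq_add_neg, Real.exp_add]
  ring

theorem tendsto_Phi_of_no_culling (hlam : 0 < lam) (hmu : 0 ≤ mu)
    (hp0 : ∀ k, 0 ≤ p k) (hp : HasSum p 1) (hlt : ∀ v ∈ Ico 0 1, v < ptilde p v)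
    (hr0 : ∀ k, 0 ≤ r k) (hr : HasSum r 1) (x : ℕ) :
    Tendsto (fun q ↦ Phi lam mu p 0 r 1 0 q x) (𝓝[>] 0)
      (𝓝 (EReal.exp (-(limitExponent lam mu p 0 r 0))).toReal) := by
  refine tendsto_Phi_delimiter_const hlam hmu hp0 hp hlt ?_ Ioo_subset_Ico_self subset_rfl
    (left_mem_Ico.2 one_pos) (fun v hv ↦ ?_) (by simp) x
  · rw [rtilde_zero_left]
    exact (continuousOn_ptilde hr.summable).mono fun v hv ↦ ⟨by linarith [hv.1], hv.2.le⟩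
  · rw [rtilde_zero_left, ← hr.tsum_eq]
    exact ptilde_le_tsum hr0 hr.summable (Ioo_subset_Icc_self hv)

theorem tendsto_Phi_of_culling {u : ℝ → ℝ} (hlam : 0 < lam) (hmu : 0 < mu)
    (hp0 : ∀ k, 0 ≤ p k) (hp : HasSum p 1) (hlt : ∀ v ∈ Ico 0 1, v < ptilde p v)
    (hrneg : 0 ≤ rneg) (hr0 : ∀ k, 0 ≤ r k) (hrsum : rneg + ∑' k, r k = 1)
    (hθ : θ ∈ Ioo 0 1) (hθ_root : rtilde rneg r θ = 1)
    (hθ_min : ∀ z ∈ Ioc (0 : ℝ) 1, rtilde rneg r z = 1 → θ ≤ z)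
    (hu : ∀ q : ℝ, 0 < q → u q ∈ Ioo (0 : ℝ) 1 ∧ q = mu * (rtilde rneg r (u q) - 1)) (x : ℕ) :
    Tendsto (fun q ↦ Phi lam mu p rneg r 1 (u q) q x) (𝓝[>] 0)
      (𝓝 (EReal.exp (-(limitExponent lam mu p rneg r θ))).toReal) := by
  have hr : Summable r := summable_of_rtilde_eq_one hr0 hrsum hθ hθ_root
  have hconv : ConvexOn ℝ (Ioc 0 1) (rtilde rneg r) := convexOn_rtilde hrneg hr0 hr
  have hone : rtilde rneg r 1 = 1 := (rtilde_one rneg r).trans hrsum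
  have hrcont : ContinuousOn (rtilde rneg r) (Ioo 0 1) :=
    (continuousOn_rtilde hr).mono Ioo_subset_Ioc_self
  have hρcont : ContinuousOn (rho lam p) (Ioo 0 1) :=
    (continuousOn_rho hp.summable).mono fun v hv ↦ ⟨by linarith [hv.1], hv.2.le⟩
  have hρ_ne : ∀ v ∈ Ioo 0 1, rho lam p v ≠ 0 := fun v hv ↦
    (rho_pos hlam (hlt v (Ioo_subset_Ico_self hv))).ne'
  have hconst : Tendsto (fun q ↦ Phi lam mu p rneg r 1 θ q x) (𝓝[>] 0)
      (𝓝 (EReal.exp (-(limitExponent lam mu p rneg r θ))).toReal) :=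
    tendsto_Phi_delimiter_const hlam hmu.le hp0 hp hlt hrcont subset_rfl Ioo_subset_Ico_self hθ
      (fun v hv ↦ le_of_convexOn_of_eq_endpoints hconv (Ioo_subset_Ioc_self hθ)
        (right_mem_Ioc.2 one_pos) hθ_root hone (Ioo_subset_Icc_self hv))
      (fun v hv ↦ (lt_of_convexOn_of_lt_root hconv hθ.2 hθ_root hone hθ_min hv).le) x
  have hfactor : Tendsto (fun q ↦
      Real.exp (∫ w in θ..u q, (q + mu * (1 - rtilde rneg r w)) / rho lam p w)) (𝓝[>] 0) (𝓝 1) := by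
    simpa using (tendsto_integral_add_div_zero hρcont hρ_ne
      (continuousOn_const.mul (continuousOn_const.sub hrcont)) (Ioo_mem_nhds hθ.1 hθ.2)
      (tendsto_delimiter hmu hconv hone hθ hθ_root hθ_min hu)).rexp
  have hprod := hfactor.mul hconst
  rw [one_mul] at hprod
  refine hprod.congr' ?_
  filter_upwards [self_mem_nhdsWithin] with q hq
  exact (Phi_change_delimiter hρcont hρ_ne hrcont subset_rfl hθ (hu q hq).1 q x).symm

end LimitOfPhi

/-- assume `μ > 0`, `φ* = 1`, `θ < 1`. Then for every `a ∈ ℕ`,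
`lim_{q↓0} Φ_q(a) = exp{-∫_θ^1 μ(1 - r̃(w))/(λ(p̃(w)-w)) dw}`, the integral taking values
in `[0,∞]` with `exp{-∞} := 0`; in particular the limit does not depend on `a`. -/
theorem stmt14 (lam mu rneg : ℝ) (p r : ℕ → ℝ) (φ θ : ℝ) (θf : ℝ → ℝ)
    (hlam : 0 < lam)
    (hp : ∀ k, 0 ≤ p k) (hpsum : ∑' k, p k = 1) (hp0 : 0 < p 0) (hp1 : p 1 = 0)
    (hφ0 : 0 < φ) (hφfix : ptilde p φ = φ)
    (hφlo : ∀ z : ℝ, 0 < z → z < φ → z < ptilde p z)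
    (hφeq : φ = 1)
    (hmu : 0 < mu) (hrneg : 0 ≤ rneg) (hr : ∀ k, 0 ≤ r k) (hr0 : r 0 = 0)
    (hrsum : rneg + ∑' k, r k = 1)
    -- characterization of `θ_q = θf q` for `q > 0`
    (hθfpos : 0 < mu * rneg → ∀ q : ℝ, 0 < q →
      θf q ∈ Set.Ioo (0:ℝ) 1 ∧ q = mu * (rtilde rneg r (θf q) - 1))
    (hθfzero : mu * rneg = 0 → ∀ q : ℝ, 0 < q → θf q = 0)
    -- characterization of `θ`
    (hθpos : 0 < mu * rneg → θ ∈ Set.Ioc (0:ℝ) 1 ∧ rtilde rneg r θ = 1 ∧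
      ∀ z ∈ Set.Ioc (0:ℝ) 1, rtilde rneg r z = 1 → θ ≤ z)
    (hθzero : mu * rneg = 0 → θ = 0)
    (hθlt : θ < 1) :
    ∀ a : ℕ,
      Filter.Tendsto (fun q => Phi lam mu p rneg r φ (θf q) q a)
        (nhdsWithin 0 (Set.Ioi 0))
        (nhds (if (∫⁻ w in Set.Ioo θ 1,
            ENNReal.ofReal (mu * (1 - rtilde rneg r w) / (lam * (ptilde p w - w)))) = ⊤
          then 0
          else Real.exp (-(∫⁻ w in Set.Ioo θ 1,
            ENNReal.ofReal (mu * (1 - rtilde rneg r w)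
              / (lam * (ptilde p w - w)))).toReal))) := by
  intro a
  subst hφeq
  have hp_sum : HasSum p 1 := hasSum_of_tsum_ne_zero one_ne_zero hpsum
  have hlt : ∀ v ∈ Ico 0 1, v < ptilde p v := by
    rintro v ⟨hv0, hv1⟩
    rcases hv0.eq_or_lt with rfl | hv0
    · rwa [ptilde_zero]
    · exact hφlo v hv0 hv1
  rw [← toReal_exp_neg_coe_ennreal]
  rcases hrneg.eq_or_lt with rfl | hrneg_pos
  · rw [zero_add] at hrsum
    rw [hθzero (mul_zero mu)]
    refine (tendsto_Phi_of_no_culling hlam hmu.le hp hp_sum hlt hr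
      (hasSum_of_tsum_ne_zero one_ne_zero hrsum) a).congr' ?_
    filter_upwards [self_mem_nhdsWithin] with q hq
    rw [hθfzero (mul_zero mu) q hq]
  · have hculling : 0 < mu * rneg := mul_pos hmu hrneg_pos
    obtain ⟨hθ, hθ_root, hθ_min⟩ := hθpos hculling
    exact tendsto_Phi_of_culling hlam hmu hp hp_sum hlt hrneg hr hrsum ⟨hθ.1, hθlt⟩ hθ_root hθ_min
      (hθfpos hculling) a
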